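/- Let f : B^n → ℝ be C^{d+1}, ω a polynomial parametric curve of degree at most s in ℝ^n with ω([-1,1]) ⊂ B^n, and g(t) = f(ω(t)). Then for each t ∈ [-1,1], Σ_{|α|=η}^{d+1} ‖f^{(α)}(ω(t))‖ ≥ C(n,d,s)·|g^{(d+1)}(t)|, where η = ⌊(d+1)/(s+1)⌋ + 1 and C(n,d,s) = [s^{2(d+1)}(n+1)^{d+1}(d+1)^{(d+1)(n+2)}]^{-1}. -/

import Mathlib

open Metric

/-!
By Faà di Bruno's formula, the derivative of order `m = d + 1` of `f ∘ ω` is a sum over the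
partitions of `{1, …, m}`, of which there are at most `m!`. The term of a partition into `k` parts
is the `k`-th derivative of `f` applied to derivatives of `ω` whose orders are the sizes of the
parts. It vanishes if some part has more than `s` elements; otherwise `m ≤ k * s`, hence
`k > m / (s + 1)`. Expanding such a term in partial derivatives of `f` leaves as coefficients
products of derivatives of the coordinates of `ω`. Since the sizes of the parts add up to `m`, these
products are at most `(2 * s ^ 2) ^ m` by a Markov inequality that loses a factor `2` per
derivative. The inequality at the end points of `[-1, 1]` comes from the extremality of Chebyshev
polynomials. The lost factor `2 ^ m` is absorbed by `(n + 1) ^ m`.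
-/

open Polynomial in
/-- The polynomial parametric curve `t ↦ ∑ i, Pᵢ(t) • bᵢ`, whose coordinates along the family `b`
are the polynomials `P`. The family need not be a basis. -/
noncomputable def polynomialCurve {ι R E : Type*} [Fintype ι] [Semiring R] [AddCommMonoid E]
    [Module R E] (P : ι → R[X]) (b : ι → E) (t : R) : E :=
  ∑ i, (P i).eval t • b i

/-- The sum of the norms of the derivatives of order `k` of `f` within `K` at `x` in the directions
of the family `b`. A partial derivative is counted once for each ordering of its directions: the
sum runs over sequences of directions, not over multi-indices. -/
noncomputable def sumNormPartialDerivWithin {ι E F : Type*} [Fintype ι] [NormedAddCommGroup E]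
    [NormedSpace ℝ E] [NormedAddCommGroup F] [NormedSpace ℝ F] (b : ι → E) (f : E → F) (K : Set E)
    (x : E) (k : ℕ) : ℝ :=
  ∑ c : Fin k → ι, ‖iteratedFDerivWithin ℝ k f K x (fun j => b (c j))‖

section Markov

open Polynomial

theorem iterate_derivative_comp_linear {R : Type*} [CommSemiring R] (p : R[X]) (a b : R) (k : ℕ) :
    derivative^[k] (p.comp (C a * X + C b)) =
      C (a ^ k) * (derivative^[k] p).comp (C a * X + C b) := by
  induction k with
  | zero => simp
  | succ k ih =>
    simp only [Function.iterate_succ_apply', ih, derivative_C_mul, derivative_comp, derivative_add,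
      derivative_X, derivative_C, mul_one, add_zero, pow_succ, C_mul]
    ring

theorem iterate_derivative_T_eval_one_le (n k : ℕ) :
    (derivative^[k] (Chebyshev.T ℝ n)).eval 1 ≤ (n : ℝ) ^ (2 * k) := by
  have nonneg (j : ℕ) : 0 ≤ (derivative^[j] (Chebyshev.T ℝ n)).eval 1 :=
    (abs_nonneg _).trans (Chebyshev.abs_iterate_derivative_T_real_le n j (x := 1) (by simp))
  induction k with
  | zero => simp
  | succ k ih =>
    calc (derivative^[k + 1] (Chebyshev.T ℝ n)).eval 1
        ≤ (2 * k + 1) * (derivative^[k + 1] (Chebyshev.T ℝ n)).eval 1 :=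
          le_mul_of_one_le_left (nonneg _) (by linarith [k.cast_nonneg (α := ℝ)])
      _ = ((n : ℝ) ^ 2 - k ^ 2) * (derivative^[k] (Chebyshev.T ℝ n)).eval 1 :=
          mod_cast Chebyshev.iterate_derivative_T_eval_one_recurrence (R := ℝ) n k
      _ ≤ (n : ℝ) ^ 2 * (n : ℝ) ^ (2 * k) :=
          mul_le_mul (sub_le_self _ (sq_nonneg _)) ih (nonneg _) (sq_nonneg _)
      _ = (n : ℝ) ^ (2 * (k + 1)) := by ring

variable {s : ℕ} {Q : ℝ[X]}

theorem abs_iterate_derivative_eval_one_le (hdeg : Q.natDegree ≤ s)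
    (hQ : ∀ x ∈ Set.Icc (-1 : ℝ) 1, |Q.eval x| ≤ 1) (k : ℕ) :
    |(derivative^[k] Q).eval 1| ≤ (s : ℝ) ^ (2 * k) := by
  refine le_trans (abs_le'.2 ⟨?_, ?_⟩) (iterate_derivative_T_eval_one_le s k)
  · exact Chebyshev.eval_iterate_derivative_le_of_forall_abs_le_one le_rfl
      (degree_le_of_natDegree_le hdeg) hQ
  · rw [← eval_neg, ← iterate_derivative_neg]
    exact Chebyshev.eval_iterate_derivative_le_of_forall_abs_le_one le_rfl
      (degree_le_of_natDegree_le (by rwa [natDegree_neg])) (by simpa using hQ)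

theorem pow_mul_abs_iterate_derivative_eval_add_le (hdeg : Q.natDegree ≤ s)
    (hQ : ∀ x ∈ Set.Icc (-1 : ℝ) 1, |Q.eval x| ≤ 1) {a b : ℝ}
    (hab : ∀ y ∈ Set.Icc (-1 : ℝ) 1, a * y + b ∈ Set.Icc (-1 : ℝ) 1) (k : ℕ) :
    |a| ^ k * |(derivative^[k] Q).eval (a + b)| ≤ (s : ℝ) ^ (2 * k) := by
  have hdeg' : (Q.comp (C a * X + C b)).natDegree ≤ s :=
    natDegree_comp_le.trans <| (Nat.mul_le_mul hdeg natDegree_linear_le).trans_eq (mul_one s)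
  simpa [iterate_derivative_comp_linear, abs_mul] using
    abs_iterate_derivative_eval_one_le hdeg' (fun y hy => by simpa using hQ _ (hab y hy)) k

theorem abs_iterate_derivative_eval_le (hdeg : Q.natDegree ≤ s)
    (hQ : ∀ x ∈ Set.Icc (-1 : ℝ) 1, |Q.eval x| ≤ 1) (k : ℕ) {x : ℝ}
    (hx : x ∈ Set.Icc (-1 : ℝ) 1) :
    |(derivative^[k] Q).eval x| ≤ (2 * (s : ℝ) ^ 2) ^ k := by
  obtain ⟨a, b, hab, ha, rfl⟩ : ∃ a b : ℝ,
      (∀ y ∈ Set.Icc (-1 : ℝ) 1, a * y + b ∈ Set.Icc (-1 : ℝ) 1) ∧ 1 ≤ 2 * |a| ∧ a + b = x := by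
    -- Send `[-1, 1]` to the longer of `[-1, x]` and `[x, 1]`, with `1` going to `x`.
    obtain ⟨hx₁, hx₂⟩ := hx
    rcases le_total 0 x with h | h
    · refine ⟨(x + 1) / 2, (x - 1) / 2, fun y hy => ⟨?_, ?_⟩, ?_, by ring⟩
      · nlinarith [hy.1, hy.2]
      · nlinarith [hy.1, hy.2]
      · linarith [le_abs_self ((x + 1) / 2)]
    · refine ⟨(x - 1) / 2, (x + 1) / 2, fun y hy => ⟨?_, ?_⟩, ?_, by ring⟩
      · nlinarith [hy.1, hy.2]
      · nlinarith [hy.1, hy.2]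
      · linarith [neg_le_abs ((x - 1) / 2)]
  calc |(derivative^[k] Q).eval (a + b)|
      ≤ (2 * |a|) ^ k * |(derivative^[k] Q).eval (a + b)| :=
        le_mul_of_one_le_left (abs_nonneg _) (one_le_pow₀ ha)
    _ = 2 ^ k * (|a| ^ k * |(derivative^[k] Q).eval (a + b)|) := by rw [mul_pow, mul_assoc]
    _ ≤ 2 ^ k * (s : ℝ) ^ (2 * k) := by
        gcongr
        exact pow_mul_abs_iterate_derivative_eval_add_le hdeg hQ hab k
    _ = (2 * (s : ℝ) ^ 2) ^ k := by rw [mul_pow, pow_mul]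

end Markov

section OrderedFinpartition

theorem card_orderedFinpartition_le_factorial (m : ℕ) :
    Fintype.card (OrderedFinpartition m) ≤ m.factorial := by
  induction m with
  | zero => simp
  | succ m ih =>
    calc Fintype.card (OrderedFinpartition (m + 1))
        = ∑ c : OrderedFinpartition m, (c.length + 1) := by
          simp [← Fintype.card_congr (OrderedFinpartition.extendEquiv m), Fintype.card_sigma]
      _ ≤ ∑ _c : OrderedFinpartition m, (m + 1) :=
          Finset.sum_le_sum fun c _ => Nat.succ_le_succ c.length_le
      _ = (m + 1) * Fintype.card (OrderedFinpartition m) := by simp [mul_comm]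
      _ ≤ (m + 1).factorial := Nat.mul_le_mul_left _ ih

variable {m : ℕ} (c : OrderedFinpartition m)

theorem orderedFinpartition_sum_partSize : ∑ j, c.partSize j = m := by
  simpa using c.sum_sigma_eq_sum fun _ => (1 : ℕ)

theorem orderedFinpartition_div_succ_lt_length (hm : m ≠ 0) {s : ℕ} (hc : ∀ j, c.partSize j ≤ s) :
    m / (s + 1) < c.length := by
  rw [Nat.div_lt_iff_lt_mul s.succ_pos]
  calc m = ∑ j, c.partSize j := (orderedFinpartition_sum_partSize c).symm
    _ ≤ ∑ _j : Fin c.length, s := Finset.sum_le_sum fun j _ => hc j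
    _ = c.length * s := by simp
    _ < c.length * (s + 1) :=
        Nat.mul_lt_mul_of_pos_left s.lt_succ_self (c.length_pos (Nat.pos_of_ne_zero hm))

end OrderedFinpartition

theorem norm_multilinearMap_sum_smul_le {κ 𝕜 F : Type*} {ι E : κ → Type*} [Fintype κ]
    [DecidableEq κ] [∀ j, Fintype (ι j)] [NormedField 𝕜] [∀ j, AddCommMonoid (E j)]
    [∀ j, Module 𝕜 (E j)] [SeminormedAddCommGroup F] [NormedSpace 𝕜 F] (D : MultilinearMap 𝕜 E F)
    (b : ∀ j, ι j → E j) {a : ∀ j, ι j → 𝕜} {B : κ → ℝ} (ha : ∀ j i, ‖a j i‖ ≤ B j) :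
    ‖D fun j => ∑ i, a j i • b j i‖ ≤
      (∏ j, B j) * ∑ c : ∀ j, ι j, ‖D fun j => b j (c j)‖ := by
  rw [D.map_sum, Finset.mul_sum]
  refine (norm_sum_le _ _).trans (Finset.sum_le_sum fun c _ => ?_)
  rw [D.map_smul_univ, norm_smul, norm_prod]
  gcongr with j
  exact ha j (c j)

section PolynomialCurve

open Polynomial

variable {ι 𝕜 E : Type*} [Fintype ι] [NontriviallyNormedField 𝕜] [NormedAddCommGroup E]
  [NormedSpace 𝕜 E] (P : ι → 𝕜[X]) (b : ι → E)

theorem hasDerivAt_polynomialCurve (t : 𝕜) :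
    HasDerivAt (polynomialCurve P b) (polynomialCurve (fun i => derivative (P i)) b t) t :=
  HasDerivAt.fun_sum fun i _ => ((P i).hasDerivAt t).smul_const (b i)

theorem contDiff_polynomialCurve {r : WithTop ℕ∞} : ContDiff 𝕜 r (polynomialCurve P b) :=
  ContDiff.sum fun i _ => ((P i).contDiff_aeval r).smul contDiff_const

theorem iteratedDeriv_polynomialCurve (k : ℕ) :
    iteratedDeriv k (polynomialCurve P b) =
      polynomialCurve (fun i => derivative^[k] (P i)) b := by
  induction k generalizing P with
  | zero => simp
  | succ k ih =>
    rw [iteratedDeriv_succ', funext fun t => (hasDerivAt_polynomialCurve P b t).deriv, ih]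
    rfl

variable {P b} in
theorem iteratedDerivWithin_polynomialCurve {I : Set 𝕜} (hI : UniqueDiffOn 𝕜 I) {t : 𝕜}
    (ht : t ∈ I) (k : ℕ) :
    iteratedDerivWithin k (polynomialCurve P b) I t =
      polynomialCurve (fun i => derivative^[k] (P i)) b t := by
  rw [iteratedDerivWithin_eq_iteratedDeriv hI (contDiff_polynomialCurve P b).contDiffAt ht,
    iteratedDeriv_polynomialCurve]

theorem eq_polynomialCurve_single {𝕂 : Type*} [RCLike 𝕂] [DecidableEq ι] {P : ι → 𝕂[X]}
    {ω : 𝕂 → EuclideanSpace 𝕂 ι} (hω : ∀ t i, ω t i = (P i).eval t) :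
    ω = polynomialCurve P fun i => EuclideanSpace.single i 1 := by
  funext t
  ext i
  simp [polynomialCurve, hω, Pi.single_apply]

theorem norm_eval_le_of_mem_closedBall {𝕂 : Type*} [RCLike 𝕂] {P : ι → 𝕂[X]}
    {ω : 𝕂 → EuclideanSpace 𝕂 ι} (hω : ∀ t i, ω t i = (P i).eval t) {r : ℝ} {t : 𝕂}
    (ht : ω t ∈ closedBall 0 r) (i : ι) : ‖(P i).eval t‖ ≤ r :=
  hω t i ▸ (PiLp.norm_apply_le (ω t) i).trans (mem_closedBall_zero_iff.1 ht)

end PolynomialCurve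

open Nat in
theorem factorial_mul_two_mul_sq_pow_le {n : ℕ} (hn : n ≠ 0) (d s : ℕ) :
    ((d + 1)! : ℝ) * (2 * (s : ℝ) ^ 2) ^ (d + 1) ≤
      (s : ℝ) ^ (2 * (d + 1)) * (n + 1) ^ (d + 1) * (d + 1) ^ ((d + 1) * (n + 2)) := by
  have hfact : ((d + 1)! : ℝ) ≤ (d + 1) ^ ((d + 1) * (n + 2)) := mod_cast
    (factorial_le_pow (d + 1)).trans
      (Nat.pow_le_pow_right d.succ_pos (Nat.le_mul_of_pos_right _ (n + 1).succ_pos))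
  have htwo : (2 : ℝ) ≤ n + 1 := mod_cast Nat.succ_le_succ (Nat.one_le_iff_ne_zero.2 hn)
  calc ((d + 1)! : ℝ) * (2 * (s : ℝ) ^ 2) ^ (d + 1)
      = (s : ℝ) ^ (2 * (d + 1)) * 2 ^ (d + 1) * (d + 1)! := by rw [mul_pow, ← pow_mul]; ring
    _ ≤ _ := by gcongr

theorem uniqueDiffOn_closedBall {E : Type*} [NormedAddCommGroup E] [NormedSpace ℝ E] (x : E) {r : ℝ}
    (hr : 0 < r) : UniqueDiffOn ℝ (closedBall x r) :=
  uniqueDiffOn_convex (convex_closedBall x r)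
    ⟨x, ball_subset_interior_closedBall (mem_ball_self hr)⟩

section ChainRule

open Polynomial Nat

variable {ι E F : Type*} [Fintype ι] [NormedAddCommGroup E] [NormedSpace ℝ E]
  [NormedAddCommGroup F] [NormedSpace ℝ F] {b : ι → E} {f : E → F} {K : Set E}

theorem sumNormPartialDerivWithin_nonneg (x : E) (k : ℕ) :
    0 ≤ sumNormPartialDerivWithin b f K x k :=
  Finset.sum_nonneg fun _ _ => norm_nonneg _

theorem sum_sumNormPartialDerivWithin_nonneg (x : E) (S : Finset ℕ) :
    0 ≤ ∑ k ∈ S, sumNormPartialDerivWithin b f K x k :=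
  Finset.sum_nonneg fun k _ => sumNormPartialDerivWithin_nonneg x k

theorem sumNormPartialDerivWithin_of_isEmpty [IsEmpty ι] (x : E) {k : ℕ} (hk : k ≠ 0) :
    sumNormPartialDerivWithin b f K x k = 0 := by
  have : NeZero k := ⟨hk⟩
  simp [sumNormPartialDerivWithin]

variable {s m : ℕ} {P : ι → ℝ[X]}

theorem norm_iteratedFDerivWithin_polynomialCurve_le (hdeg : ∀ i, (P i).natDegree ≤ s)
    (hP : ∀ i, ∀ t ∈ Set.Icc (-1 : ℝ) 1, |(P i).eval t| ≤ 1) (hm : m ≠ 0)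
    (c : OrderedFinpartition m) (x : E) {t : ℝ} (ht : t ∈ Set.Icc (-1 : ℝ) 1) :
    ‖iteratedFDerivWithin ℝ c.length f K x
        fun j => polynomialCurve (fun i => derivative^[c.partSize j] (P i)) b t‖ ≤
      (2 * (s : ℝ) ^ 2) ^ m *
        ∑ k ∈ Finset.Icc (m / (s + 1) + 1) m, sumNormPartialDerivWithin b f K x k := by
  set D := iteratedFDerivWithin ℝ c.length f K x
  by_cases! hc : ∃ j, s < c.partSize j
  · obtain ⟨j, hj⟩ := hc
    have hzero : polynomialCurve (fun i => derivative^[c.partSize j] (P i)) b t = 0 := by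
      simp [polynomialCurve, iterate_derivative_eq_zero ((hdeg _).trans_lt hj)]
    rw [D.map_coord_zero j hzero, norm_zero]
    exact mul_nonneg (by positivity) (sum_sumNormPartialDerivWithin_nonneg x _)
  · have length_mem : c.length ∈ Finset.Icc (m / (s + 1) + 1) m :=
      Finset.mem_Icc.2 ⟨orderedFinpartition_div_succ_lt_length c hm hc, c.length_le⟩
    calc _ ≤ (∏ j, (2 * (s : ℝ) ^ 2) ^ c.partSize j) * sumNormPartialDerivWithin b f K x c.length :=
          norm_multilinearMap_sum_smul_le D.toMultilinearMap (fun _ => b)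
            fun j i => abs_iterate_derivative_eval_le (hdeg i) (hP i) (c.partSize j) ht
      _ = (2 * (s : ℝ) ^ 2) ^ m * sumNormPartialDerivWithin b f K x c.length := by
          rw [Finset.prod_pow_eq_pow_sum, orderedFinpartition_sum_partSize]
      _ ≤ _ := by
          gcongr
          exact Finset.single_le_sum (fun k _ => sumNormPartialDerivWithin_nonneg x k) length_mem

theorem norm_iteratedDerivWithin_comp_polynomialCurve_le (hdeg : ∀ i, (P i).natDegree ≤ s)
    (hP : ∀ i, ∀ t ∈ Set.Icc (-1 : ℝ) 1, |(P i).eval t| ≤ 1) (hm : m ≠ 0)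
    (hf : ContDiffOn ℝ m f K) (hK : UniqueDiffOn ℝ K)
    (hmaps : Set.MapsTo (polynomialCurve P b) (Set.Icc (-1) 1) K)
    {t : ℝ} (ht : t ∈ Set.Icc (-1 : ℝ) 1) :
    ‖iteratedDerivWithin m (f ∘ polynomialCurve P b) (Set.Icc (-1) 1) t‖ ≤
      m ! * (2 * (s : ℝ) ^ 2) ^ m * ∑ k ∈ Finset.Icc (m / (s + 1) + 1) m,
        sumNormPartialDerivWithin b f K (polynomialCurve P b t) k := by
  have hI : UniqueDiffOn ℝ (Set.Icc (-1 : ℝ) 1) := uniqueDiffOn_Icc (by norm_num)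
  rw [iteratedDerivWithin_vcomp_eq_sum_orderedFinpartition (hf _ (hmaps ht))
    (contDiff_polynomialCurve P b).contDiffWithinAt hK hI ht hmaps le_rfl]
  simp only [iteratedDerivWithin_polynomialCurve hI ht]
  refine (norm_sum_le_of_le _ fun c _ =>
    norm_iteratedFDerivWithin_polynomialCurve_le hdeg hP hm c _ ht).trans ?_
  rw [Finset.sum_const, Finset.card_univ, nsmul_eq_mul, mul_assoc]
  gcongr
  · exact mul_nonneg (by positivity) (sum_sumNormPartialDerivWithin_nonneg _ _)
  · exact card_orderedFinpartition_le_factorial m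

theorem main_chain_rule_inequality_general {d : ℕ} (hdeg : ∀ i, (P i).natDegree ≤ s)
    (hP : ∀ i, ∀ t ∈ Set.Icc (-1 : ℝ) 1, |(P i).eval t| ≤ 1)
    (hf : ContDiffOn ℝ (d + 1) f K) (hK : UniqueDiffOn ℝ K)
    (hmaps : Set.MapsTo (polynomialCurve P b) (Set.Icc (-1) 1) K)
    {t : ℝ} (ht : t ∈ Set.Icc (-1 : ℝ) 1) :
    ((s : ℝ) ^ (2 * (d + 1)) * (Fintype.card ι + 1) ^ (d + 1) *
          (d + 1) ^ ((d + 1) * (Fintype.card ι + 2)))⁻¹ *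
        ‖iteratedDerivWithin (d + 1) (f ∘ polynomialCurve P b) (Set.Icc (-1) 1) t‖ ≤
      ∑ k ∈ Finset.Icc ((d + 1) / (s + 1) + 1) (d + 1),
        sumNormPartialDerivWithin b f K (polynomialCurve P b t) k := by
  have hbound := norm_iteratedDerivWithin_comp_polynomialCurve_le hdeg hP d.succ_ne_zero
    (mod_cast hf) hK hmaps ht
  refine inv_mul_le_of_le_mul₀ (by positivity) (sum_sumNormPartialDerivWithin_nonneg _ _)
    (hbound.trans ?_)
  rcases isEmpty_or_nonempty ι with hι | hι
  · have sum_eq_zero : ∑ k ∈ Finset.Icc ((d + 1) / (s + 1) + 1) (d + 1),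
        sumNormPartialDerivWithin b f K (polynomialCurve P b t) k = 0 :=
      Finset.sum_eq_zero fun k hk => sumNormPartialDerivWithin_of_isEmpty _
        (Nat.ne_zero_of_lt (Finset.mem_Icc.1 hk).1)
    simp [sum_eq_zero]
  · exact mul_le_mul_of_nonneg_right (factorial_mul_two_mul_sq_pow_le Fintype.card_ne_zero d s)
      (sum_sumNormPartialDerivWithin_nonneg _ _)

end ChainRule

/-- Main chain-rule inequality: for `f : Bⁿ → ℝ` of class `C^{d+1}`, a polynomial curve
`ω` of degree ≤ `s` with `ω([-1,1]) ⊆ Bⁿ`, and `g = f ∘ ω`, for each `t ∈ [-1,1]` the sum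
of the norms of the partial derivatives of `f` of orders `η = ⌊(d+1)/(s+1)⌋ + 1` up to
`d+1` at `ω(t)` is at least `C(n,d,s) |g^{(d+1)}(t)|`, where
`C(n,d,s) = [s^{2(d+1)} (n+1)^{d+1} (d+1)^{(d+1)(n+2)}]⁻¹`. -/
theorem main_chain_rule_inequality
    (n d s : ℕ) (f : EuclideanSpace ℝ (Fin n) → ℝ)
    (hf : ContDiffOn ℝ (d + 1) f (closedBall (0 : EuclideanSpace ℝ (Fin n)) 1))
    (P : Fin n → Polynomial ℝ) (hdeg : ∀ i, (P i).natDegree ≤ s)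
    (ω : ℝ → EuclideanSpace ℝ (Fin n)) (hωdef : ∀ t i, ω t i = (P i).eval t)
    (hball : ∀ t ∈ Set.Icc (-1 : ℝ) 1,
      ω t ∈ closedBall (0 : EuclideanSpace ℝ (Fin n)) 1) :
    ∀ t ∈ Set.Icc (-1 : ℝ) 1,
      ((s : ℝ) ^ (2 * (d + 1)) * (n + 1) ^ (d + 1) * (d + 1) ^ ((d + 1) * (n + 2)))⁻¹ *
          |iteratedDerivWithin (d + 1) (fun u => f (ω u)) (Set.Icc (-1 : ℝ) 1) t| ≤
        ∑ k ∈ Finset.Icc ((d + 1) / (s + 1) + 1) (d + 1),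
          ∑ c : Fin k → Fin n,
            |iteratedFDerivWithin ℝ k f (closedBall (0 : EuclideanSpace ℝ (Fin n)) 1)
              (ω t) (fun i => EuclideanSpace.single (c i) 1)| := by
  intro t ht
  obtain rfl := eq_polynomialCurve_single hωdef
  simpa [sumNormPartialDerivWithin, Function.comp_def] using
    main_chain_rule_inequality_general hdeg
      (fun i u hu => norm_eval_le_of_mem_closedBall hωdef (hball u hu) i) hf
      (uniqueDiffOn_closedBall 0 one_pos) hball ht
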